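/- (Two-sided control under the head condition, frequentist version of Theorem 4(ii).) Let 0 < τ < H₀, n₀ ≥ 1, and let A satisfy 1 + τ < A < 1 + H₀; set α = f_o(A,τ) and β = g_o(A,H₀). Then α > 0, β > 0, and for every θ in the head class ℋ(τ,H₀,n₀) and all integers n₁ ≥ n₀ and n₂ ≥ 1: P_θ({x : ∃ d ≥ 1 with (d < d_τ(θ) − n₁ or d > d_τ(θ) + n₂) and crit_A(x,d) ≤ crit_A(x,d_τ(θ))}) ≤ e^{−αn₂}/(1−e^{−α}) + e^{−βn₁}/(1−e^{−β}). -/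

import Mathlib

open MeasureTheory ProbabilityTheory

noncomputable section

/-- Tail sum `∑_{i>d} θ_i²` (indices `i = 1,2,…`). -/
def tailSum (θ : ℕ → ℝ) (d : ℕ) : ℝ := ∑' i : ℕ, if d < i then θ i ^ 2 else 0

/-- The τ-quantization error `r_τ(d,θ) = ∑_{i>d} θ_i² + τ d ε²`. -/
def rErr (ε τ : ℝ) (θ : ℕ → ℝ) (d : ℕ) : ℝ := tailSum θ d + τ * d * ε ^ 2

/-- The local effective τ-dimension: the smallest `d ≥ 1` minimizing `r_τ(·,θ)` over `d ≥ 1`. -/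
def effDim (ε τ : ℝ) (θ : ℕ → ℝ) : ℕ :=
  sInf {d : ℕ | 1 ≤ d ∧ ∀ d' : ℕ, 1 ≤ d' → rErr ε τ θ d ≤ rErr ε τ θ d'}

/-- The penalized criterion `crit_A(x,d) = -∑_{i=1}^d x_i² + A ε² d`. -/
def critF (ε A : ℝ) (x : ℕ → ℝ) (d : ℕ) : ℝ :=
  -(∑ i ∈ Finset.Icc 1 d, x i ^ 2) + A * ε ^ 2 * d

/-- `f(h,a,t) = (1/2)(a h + log(1-h) - t h/(1-h))`. -/
def fFun (h a t : ℝ) : ℝ := (a * h + Real.log (1 - h) - t * h / (1 - h)) / 2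

/-- `g(h,a,t) = f(-h,a,t)`. -/
def gFun (h a t : ℝ) : ℝ := fFun (-h) a t

/-- `f_o(a,t) = sup_{h ∈ [0,1)} f(h,a,t)`. -/
def fSup (a t : ℝ) : ℝ := sSup ((fun h => fFun h a t) '' Set.Ico 0 1)

/-- `g_o(a,t) = sup_{h ∈ [0,1]} g(h,a,t)`. -/
def gSup (a t : ℝ) : ℝ := sSup ((fun h => gFun h a t) '' Set.Icc 0 1)

/-- `P` is the infinite product measure `⨂_{i≥1} N(θ_i, ε²)` on the sequence space `ℝ^ℕ`,
characterized by being a probability measure whose finite-dimensional projections onto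
the coordinates `1,…,n` are the corresponding finite products of Gaussians. -/
def IsGaussianProduct (ε : ℝ) (θ : ℕ → ℝ) (P : Measure (ℕ → ℝ)) : Prop :=
  IsProbabilityMeasure P ∧
  ∀ n : ℕ, P.map (fun x (i : Fin n) => x ((i : ℕ) + 1)) =
    Measure.pi fun i : Fin n => gaussianReal (θ ((i : ℕ) + 1)) ((ε ^ 2).toNNReal)

lemma fFun_sup_pos (A t : ℝ) (ht : 0 < t) (hA : 1 + t < A) : 0 < fSup A t := by
  have hApos : 0 < A := by linarith
  have hq : (1 + t) / A < 1 := by rw [div_lt_one hApos]; exact hA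
  have hq0 : 0 < (1 + t) / A := by positivity
  set h := (1 - (1 + t) / A) / 2 with hh
  have h0 : 0 < h := by rw [hh]; linarith
  have h1 : h < 1 := by rw [hh]; linarith
  have h2 : (1 + t) / A < 1 - h := by rw [hh]; linarith
  have h1' : 0 < 1 - h := by linarith
  have hbdd : BddAbove ((fun h => fFun h A t) '' Set.Ico 0 1) := by
    refine ⟨A / 2, ?_⟩
    rintro _ ⟨y, ⟨hy0, hy1⟩, rfl⟩
    have hl : Real.log (1 - y) ≤ 0 := Real.log_nonpos (by linarith) (by linarith)
    have hd : 0 ≤ t * y / (1 - y) := div_nonneg (by positivity) (by linarith)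
    have : A * y ≤ A := by nlinarith
    simp only [fFun]; linarith
  have hpos : 0 < fFun h A t := by
    have hl := Real.one_sub_inv_le_log_of_pos h1'
    have e : 1 - (1 - h)⁻¹ - t * h / (1 - h) = - (h * ((1 + t) / (1 - h))) := by
      field_simp; ring
    have h3 : (1 + t) / (1 - h) < A := by
      rw [div_lt_iff₀ h1']; rw [div_lt_iff₀ hApos] at h2; linarith
    have := mul_lt_mul_of_pos_left h3 h0
    simp only [fFun]; linarith
  exact lt_of_lt_of_le hpos (le_csSup hbdd ⟨h, ⟨h0.le, h1⟩, rfl⟩)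

lemma gFun_sup_pos (A t : ℝ) (hA0 : 0 < A) (ht : 0 < t) (hA : A < 1 + t) : 0 < gSup A t := by
  have hq : 1 < (1 + t) / A := by rw [one_lt_div hA0]; exact hA
  set h := min 1 (((1 + t) / A - 1) / 2) with hh
  have h0 : 0 < h := lt_min one_pos (by linarith)
  have h1 : h ≤ 1 := min_le_left _ _
  have h2 : 1 + h < (1 + t) / A := by
    have : h ≤ ((1 + t) / A - 1) / 2 := min_le_right _ _
    linarith
  have h1' : 0 < 1 + h := by linarith
  have hbdd : BddAbove ((fun h => gFun h A t) '' Set.Icc 0 1) := by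
    refine ⟨(1 + t) / 2, ?_⟩
    rintro _ ⟨y, ⟨hy0, hy1⟩, rfl⟩
    have hl : Real.log (1 - -y) ≤ (1 - -y) - 1 := Real.log_le_sub_one_of_pos (by linarith)
    have hd : -(t * -y / (1 - -y)) ≤ t := by
      rw [show -(t * -y / (1 - -y)) = t * y / (1 + y) by rw [sub_neg_eq_add]; ring]
      rw [div_le_iff₀ (by linarith)]; nlinarith
    have : A * -y ≤ 0 := by nlinarith
    simp only [gFun, fFun]; linarith
  have hpos : 0 < gFun h A t := by
    have hl := Real.one_sub_inv_le_log_of_pos h1'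
    have e : 1 - (1 + h)⁻¹ - t * -h / (1 + h) = (h * ((1 + t) / (1 + h))) := by
      field_simp; ring
    have h3 : A < (1 + t) / (1 + h) := by
      rw [lt_div_iff₀ h1']; rw [lt_div_iff₀ hA0] at h2; linarith
    have := mul_lt_mul_of_pos_left h3 h0
    simp only [gFun, fFun, sub_neg_eq_add]; linarith
  exact lt_of_lt_of_le hpos (le_csSup hbdd ⟨h, ⟨h0.le, h1⟩, rfl⟩)

lemma le_exp_sSup (S : Set ℝ) (hS : S.Nonempty) (p : ENNReal) (k : ℝ) (hk : 0 < k)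
    (hp : ∀ s ∈ S, p ≤ ENNReal.ofReal (Real.exp (-(k * s)))) :
    p ≤ ENNReal.ofReal (Real.exp (-(k * sSup S))) := by
  obtain ⟨s0, hs0⟩ := hS
  have hpt : p ≠ ⊤ := ne_top_of_le_ne_top ENNReal.ofReal_ne_top (hp s0 hs0)
  by_cases hp0 : p = 0
  · simp [hp0]
  have hq : 0 < p.toReal := ENNReal.toReal_pos hp0 hpt
  rw [ENNReal.le_ofReal_iff_toReal_le hpt (Real.exp_pos _).le]
  have : sSup S ≤ -Real.log p.toReal / k := by
    apply csSup_le ⟨s0, hs0⟩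
    intro s hs
    have := hp s hs
    rw [ENNReal.le_ofReal_iff_toReal_le hpt (Real.exp_pos _).le,
      ← Real.log_le_iff_le_exp hq] at this
    rw [le_div_iff₀ hk]; linarith
  rw [le_div_iff₀ hk] at this
  rw [← Real.log_le_iff_le_exp hq]; linarith

lemma lintegral_gauss_sq (ε m w : ℝ) (hε : 0 < ε) (hw : w < 1) :
    ∫⁻ x, ENNReal.ofReal (Real.exp (w * x ^ 2 / (2 * ε ^ 2)))
      ∂(gaussianReal m ((ε ^ 2).toNNReal)) =
    ENNReal.ofReal (Real.exp (-Real.log (1 - w) / 2 + w * m ^ 2 / (2 * ε ^ 2 * (1 - w)))) := by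
  have hv : (ε ^ 2).toNNReal ≠ 0 := by simp [hε.ne']
  have h1w : 0 < 1 - w := by linarith
  have hv' : (ε ^ 2 / (1 - w)).toNNReal ≠ 0 := by
    have : 0 < ε ^ 2 / (1 - w) := by positivity
    simpa using this
  rw [gaussianReal_of_var_ne_zero _ hv,
    lintegral_withDensity_eq_lintegral_mul _ (measurable_gaussianPDF _ _) (by fun_prop)]
  have key : ∀ x, (gaussianPDF m (ε ^ 2).toNNReal *
      fun x => ENNReal.ofReal (Real.exp (w * x ^ 2 / (2 * ε ^ 2)))) x =
      ENNReal.ofReal (Real.exp (-Real.log (1 - w) / 2 + w * m ^ 2 / (2 * ε ^ 2 * (1 - w)))) *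
      ENNReal.ofReal (gaussianPDFReal (m / (1 - w)) (ε ^ 2 / (1 - w)).toNNReal x) := by
    intro x
    simp only [Pi.mul_apply, gaussianPDF]
    rw [← ENNReal.ofReal_mul (gaussianPDFReal_nonneg _ _ _),
      ← ENNReal.ofReal_mul (Real.exp_pos _).le]
    congr 1
    simp only [gaussianPDFReal]
    rw [Real.coe_toNNReal _ (by positivity), Real.coe_toNNReal _ (by positivity)]
    have hs : Real.exp (-Real.log (1 - w) / 2) = (√(1 - w))⁻¹ := by
      rw [neg_div, Real.exp_neg, ← Real.log_sqrt h1w.le, Real.exp_log (Real.sqrt_pos.2 h1w)]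
    have hs2 : √(2 * Real.pi * (ε ^ 2 / (1 - w))) = √(2 * Real.pi * ε ^ 2) / √(1 - w) := by
      rw [← mul_div_assoc, Real.sqrt_div (by positivity)]
    have hne : √(1 - w) ≠ 0 := (Real.sqrt_pos.2 h1w).ne'
    rw [Real.exp_add, hs, hs2, inv_div, mul_assoc, ← Real.exp_add]
    rw [show (√(1 - w))⁻¹ * Real.exp (w * m ^ 2 / (2 * ε ^ 2 * (1 - w))) *
      (√(1 - w) / √(2 * Real.pi * ε ^ 2) *
        Real.exp (-(x - m / (1 - w)) ^ 2 / (2 * (ε ^ 2 / (1 - w))))) =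
      (√(2 * Real.pi * ε ^ 2))⁻¹ * (Real.exp (w * m ^ 2 / (2 * ε ^ 2 * (1 - w))) *
        Real.exp (-(x - m / (1 - w)) ^ 2 / (2 * (ε ^ 2 / (1 - w))))) by
        field_simp, ← Real.exp_add]
    congr 2
    field_simp
    ring
  simp_rw [key]
  rw [lintegral_const_mul _ (by fun_prop), lintegral_gaussianPDFReal_eq_one _ hv', mul_one]

lemma sum_fin_Ioc (a b : ℕ) (φ : ℕ → ℝ) :
    ∑ i : Fin b, (if a < (i : ℕ) + 1 then φ ((i : ℕ) + 1) else 0) = ∑ i ∈ Finset.Ioc a b, φ i := by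
  rw [Fin.sum_univ_eq_sum_range (fun i => if a < i + 1 then φ (i + 1) else 0) b,
    Finset.sum_ite, Finset.sum_const_zero, add_zero]
  refine Finset.sum_bij (fun i _ => i + 1) ?_ ?_ ?_ ?_
  · intro i hi; simp at hi ⊢; omega
  · intro i _ j _ hij; omega
  · intro j hj
    simp at hj
    exact ⟨j - 1, by simp; omega, by omega⟩
  · intros; rfl

lemma chernoff (ε h A t : ℝ) (hε : 0 < ε) (hh : h < 1) (θ : ℕ → ℝ) (P : Measure (ℕ → ℝ))
    (hP : IsGaussianProduct ε θ P) (a k : ℕ)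
    (hθ : h * ∑ i ∈ Finset.Ioc a (a + k), θ i ^ 2 ≤ h * (t * ε ^ 2 * k)) :
    P {x | h * (A * ε ^ 2 * k) ≤ h * ∑ i ∈ Finset.Ioc a (a + k), x i ^ 2} ≤
      ENNReal.ofReal (Real.exp (-(k * fFun h A t))) := by
  obtain ⟨hprob, hmap⟩ := hP
  have hh1 : 0 < 1 - h := by linarith
  set b := a + k with hb
  let w : Fin b → ℝ := fun i => if a < (i : ℕ) + 1 then h else 0
  have hw : ∀ i, w i < 1 := by
    intro i; simp only [w]; split_ifs <;> linarith
  let X : Fin b → ℝ → ENNReal := fun i y => ENNReal.ofReal (Real.exp (w i * y ^ 2 / (2 * ε ^ 2)))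
  have hX : ∀ i, Measurable (X i) := by intro i; fun_prop
  have hwsum : ∀ ψ : ℕ → ℝ, ∑ i : Fin b, w i * ψ ((i : ℕ) + 1) =
      h * ∑ i ∈ Finset.Ioc a b, ψ i := by
    intro ψ
    rw [Finset.mul_sum, ← sum_fin_Ioc]
    refine Finset.sum_congr rfl fun i _ => ?_
    simp only [w]; split_ifs <;> simp
  let F : (Fin b → ℝ) → ENNReal := fun y => ∏ i, X i (y i)
  have hF : Measurable F := by
    refine Finset.measurable_prod _ fun i _ => (hX i).comp (measurable_pi_apply i)
  let π : (ℕ → ℝ) → (Fin b → ℝ) := fun x i => x ((i : ℕ) + 1)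
  have hπ : Measurable π := by
    refine measurable_pi_lambda _ fun i => measurable_pi_apply _
  have hFx : ∀ x, F (π x) =
      ENNReal.ofReal (Real.exp ((h * ∑ i ∈ Finset.Ioc a b, x i ^ 2) / (2 * ε ^ 2))) := by
    intro x
    simp only [F, X, π]
    rw [← ENNReal.ofReal_prod_of_nonneg (fun _ _ => (Real.exp_pos _).le), ← Real.exp_sum,
      ← Finset.sum_div, hwsum (fun i => x i ^ 2)]
  have hint : ∫⁻ x, F (π x) ∂P ≤ ENNReal.ofReal (Real.exp (k * (-Real.log (1 - h) / 2 +
      t * h / (2 * (1 - h))))) := by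
    rw [← lintegral_map hF hπ, hmap b]
    simp only [F]
    rw [lintegral_prod_eq_prod_lintegral_of_indepFun Finset.univ (fun i (y : Fin b → ℝ) => X i (y i))
      (iIndepFun_pi fun i => (hX i).aemeasurable) (fun i => (hX i).comp (measurable_pi_apply i))]
    have : ∀ i : Fin b, ∫⁻ y, X i (y i) ∂(Measure.pi fun i : Fin b =>
        gaussianReal (θ ((i : ℕ) + 1)) ((ε ^ 2).toNNReal)) =
        ENNReal.ofReal (Real.exp (-Real.log (1 - w i) / 2 +
          w i * θ ((i : ℕ) + 1) ^ 2 / (2 * ε ^ 2 * (1 - w i)))) := by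
      intro i
      rw [(measurePreserving_eval (fun i : Fin b =>
        gaussianReal (θ ((i : ℕ) + 1)) ((ε ^ 2).toNNReal)) i).lintegral_comp (hX i)]
      exact lintegral_gauss_sq ε _ _ hε (hw i)
    rw [Finset.prod_congr rfl fun i _ => this i,
      ← ENNReal.ofReal_prod_of_nonneg (fun _ _ => (Real.exp_pos _).le), ← Real.exp_sum]
    apply ENNReal.ofReal_le_ofReal
    apply Real.exp_le_exp.2
    have e : ∑ i : Fin b, (-Real.log (1 - w i) / 2 +
          w i * θ ((i : ℕ) + 1) ^ 2 / (2 * ε ^ 2 * (1 - w i))) =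
        ∑ i ∈ Finset.Ioc a b, (-Real.log (1 - h) / 2 + h * θ i ^ 2 / (2 * ε ^ 2 * (1 - h))) := by
      rw [← sum_fin_Ioc]
      refine Finset.sum_congr rfl fun i _ => ?_
      simp only [w]; split_ifs <;> simp
    rw [e, Finset.sum_add_distrib, Finset.sum_const, ← Finset.sum_div, ← Finset.mul_sum,
      Nat.card_Ioc, hb, Nat.add_sub_cancel_left, nsmul_eq_mul, mul_add]
    gcongr
    calc _ ≤ h * (t * ε ^ 2 * k) / (2 * ε ^ 2 * (1 - h)) := by gcongr
      _ = _ := by field_simp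
  set c : ENNReal := ENNReal.ofReal (Real.exp (h * (A * ε ^ 2 * k) / (2 * ε ^ 2))) with hc
  have hsub : {x : ℕ → ℝ | h * (A * ε ^ 2 * k) ≤ h * ∑ i ∈ Finset.Ioc a b, x i ^ 2} ⊆
      {x | c ≤ F (π x)} := by
    intro x hx
    simp only [Set.mem_setOf_eq] at hx ⊢
    rw [hFx, hc]
    apply ENNReal.ofReal_le_ofReal
    apply Real.exp_le_exp.2
    gcongr
  refine (measure_mono hsub).trans ?_
  have hm := meas_ge_le_lintegral_div (μ := P) (f := fun x => F (π x)) (hF.comp hπ).aemeasurable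
    (ε := c) (by simp [hc, Real.exp_pos]) (by simp [hc])
  refine hm.trans ((ENNReal.div_le_div_right hint _).trans ?_)
  rw [hc, ← ENNReal.ofReal_div_of_pos (Real.exp_pos _), ← Real.exp_sub]
  apply ENNReal.ofReal_le_ofReal
  apply Real.exp_le_exp.2
  apply le_of_eq
  simp only [fFun]
  field_simp
  ring

lemma tailSum_sub (θ : ℕ → ℝ) (hs : Summable fun i => θ i ^ 2) (a k : ℕ) :
    tailSum θ a = ∑ i ∈ Finset.Ioc a (a + k), θ i ^ 2 + tailSum θ (a + k) := by
  have hsum : ∀ d, Summable fun i => if d < i then θ i ^ 2 else 0 := by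
    intro d
    refine hs.of_nonneg_of_le (fun i => ?_) (fun i => ?_)
    · split_ifs <;> positivity
    · split_ifs
      · exact le_rfl
      · positivity
  unfold tailSum
  have h1 : ∑ i ∈ Finset.Ioc a (a + k), θ i ^ 2 =
      ∑' i, if i ∈ Finset.Ioc a (a + k) then θ i ^ 2 else 0 := by
    rw [tsum_eq_sum (s := Finset.Ioc a (a + k))]
    · exact Finset.sum_congr rfl fun i hi => by simp only [hi, if_true]
    · intro i hi; simp only [hi, if_false]
  rw [h1, ← Summable.tsum_add _ (hsum _)]
  · congr 1; ext i
    simp only [Finset.mem_Ioc]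
    split_ifs <;> first | (exfalso; omega) | simp
  · apply summable_of_ne_finset_zero (s := Finset.Ioc a (a + k))
    intro i hi; simp only [hi, if_false]

lemma tailSum_nonneg (θ : ℕ → ℝ) (d : ℕ) : 0 ≤ tailSum θ d :=
  tsum_nonneg fun i => by split_ifs <;> positivity

lemma effDim_mem (ε τ : ℝ) (hε : 0 < ε) (hτ : 0 < τ) (θ : ℕ → ℝ) :
    1 ≤ effDim ε τ θ ∧ ∀ d' : ℕ, 1 ≤ d' → rErr ε τ θ (effDim ε τ θ) ≤ rErr ε τ θ d' := by
  have hne : {d : ℕ | 1 ≤ d ∧ ∀ d' : ℕ, 1 ≤ d' → rErr ε τ θ d ≤ rErr ε τ θ d'}.Nonempty := by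
    obtain ⟨N, hN⟩ := exists_nat_ge (rErr ε τ θ 1 / (τ * ε ^ 2))
    rw [div_le_iff₀ (by positivity)] at hN
    obtain ⟨d, hd, hmin⟩ := Finset.exists_min_image (Finset.Icc 1 (N + 1)) (rErr ε τ θ)
      ⟨1, by simp⟩
    refine ⟨d, (Finset.mem_Icc.1 hd).1, fun d' hd' => ?_⟩
    by_cases h : d' ≤ N + 1
    · exact hmin d' (Finset.mem_Icc.2 ⟨hd', h⟩)
    · refine (hmin 1 (by simp)).trans (hN.trans ?_)
      have h1 : (N : ℝ) ≤ d' := by exact_mod_cast (by omega)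
      have h2 := tailSum_nonneg θ d'
      have h3 : (N : ℝ) * (τ * ε ^ 2) ≤ d' * (τ * ε ^ 2) := by gcongr
      unfold rErr
      linarith
  exact Nat.sInf_mem hne

lemma critF_add (ε A : ℝ) (x : ℕ → ℝ) (a k : ℕ) :
    critF ε A x (a + k) = critF ε A x a - ∑ i ∈ Finset.Ioc a (a + k), x i ^ 2 + A * ε ^ 2 * k := by
  unfold critF
  have : ∑ i ∈ Finset.Icc 1 (a + k), x i ^ 2 =
      ∑ i ∈ Finset.Icc 1 a, x i ^ 2 + ∑ i ∈ Finset.Ioc a (a + k), x i ^ 2 := by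
    rw [← Finset.sum_union]
    · congr 1; ext i; simp; omega
    · rw [Finset.disjoint_left]; intro i; simp; omega
  rw [this]; push_cast; ring

lemma tsum_geom_bound (c : ℝ) (hc : 0 < c) (n : ℕ) :
    ∑' j : ℕ, ENNReal.ofReal (Real.exp (-(((n + 1 + j : ℕ) : ℝ) * c))) ≤
      ENNReal.ofReal (Real.exp (-c * n) / (1 - Real.exp (-c))) := by
  have hr : Real.exp (-c) < 1 := by simpa using hc
  have hg := (hasSum_geometric_of_lt_one (Real.exp_pos (-c)).le hr).mul_left (Real.exp (-c * n))
  have hle : ∀ j : ℕ, ENNReal.ofReal (Real.exp (-(((n + 1 + j : ℕ) : ℝ) * c))) ≤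
      ENNReal.ofReal (Real.exp (-c * n) * Real.exp (-c) ^ j) := by
    intro j
    apply ENNReal.ofReal_le_ofReal
    rw [← Real.exp_nat_mul, ← Real.exp_add]
    apply Real.exp_le_exp.2
    push_cast
    nlinarith
  refine (ENNReal.tsum_le_tsum hle).trans (le_of_eq ?_)
  rw [← ENNReal.ofReal_tsum_of_nonneg (fun j => by positivity) hg.summable, hg.tsum_eq, div_eq_mul_inv]

theorem stmt16 (ε τ H₀ A : ℝ) (hε : 0 < ε) (hτ : 0 < τ) (hτH : τ < H₀)
    (n₀ : ℕ) (hn₀ : 1 ≤ n₀) (hA1 : 1 + τ < A) (hA2 : A < 1 + H₀) :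
    0 < fSup A τ ∧ 0 < gSup A H₀ ∧
    ∀ θ : ℕ → ℝ, Summable (fun i => θ i ^ 2) →
    (∀ d : ℕ, n₀ ≤ d → d ≤ effDim ε τ θ →
      H₀ * ε ^ 2 * d ≤ ∑ i ∈ Finset.Icc (effDim ε τ θ - d + 1) (effDim ε τ θ), θ i ^ 2) →
    ∀ n₁ n₂ : ℕ, n₀ ≤ n₁ → 1 ≤ n₂ →
    ∀ P : Measure (ℕ → ℝ), IsGaussianProduct ε θ P →
    P {x | ∃ d : ℕ, 1 ≤ d ∧ (d + n₁ < effDim ε τ θ ∨ effDim ε τ θ + n₂ < d) ∧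
        critF ε A x d ≤ critF ε A x (effDim ε τ θ)} ≤
      ENNReal.ofReal (Real.exp (-(fSup A τ) * n₂) / (1 - Real.exp (-(fSup A τ))) +
        Real.exp (-(gSup A H₀) * n₁) / (1 - Real.exp (-(gSup A H₀)))) := by
  have hα := fFun_sup_pos A τ hτ hA1
  have hβ := gFun_sup_pos A H₀ (by linarith) (by linarith) hA2
  refine ⟨hα, hβ, ?_⟩
  intro θ hs hH n₁ n₂ hn₁ hn₂ P hP
  obtain ⟨hD1, hDmin⟩ := effDim_mem ε τ hε hτ θ
  set D := effDim ε τ θ with hD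
  have hup : ∀ j : ℕ, P {x | critF ε A x (D + (n₂ + 1 + j)) ≤ critF ε A x D} ≤
      ENNReal.ofReal (Real.exp (-(((n₂ + 1 + j : ℕ) : ℝ) * fSup A τ))) := by
    intro j
    generalize hk : n₂ + 1 + j = k
    have hk0 : 0 < k := by omega
    refine le_exp_sSup _ (Set.Nonempty.image _ ⟨0, by simp⟩) _ _ (by exact_mod_cast hk0) ?_
    rintro _ ⟨h, ⟨h0, h1⟩, rfl⟩
    have hθ : ∑ i ∈ Finset.Ioc D (D + k), θ i ^ 2 ≤ τ * ε ^ 2 * k := by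
      have h3 := hDmin (D + k) (by omega)
      have h4 := tailSum_sub θ hs D k
      unfold rErr at h3
      push_cast at h3
      linarith
    refine (measure_mono ?_).trans (chernoff ε h A τ hε h1 θ P hP D k (by gcongr))
    intro x hx
    simp only [Set.mem_setOf_eq] at hx ⊢
    rw [critF_add] at hx
    gcongr
    linarith
  have hlow : ∀ j : ℕ, P {x | n₁ + 1 + j < D ∧ critF ε A x (D - (n₁ + 1 + j)) ≤ critF ε A x D} ≤
      ENNReal.ofReal (Real.exp (-(((n₁ + 1 + j : ℕ) : ℝ) * gSup A H₀))) := by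
    intro j
    generalize hk : n₁ + 1 + j = k
    have hk0 : 0 < k := by omega
    by_cases hkD : k < D
    swap
    · simp [hkD]
    refine le_exp_sSup _ (Set.Nonempty.image _ ⟨0, by simp⟩) _ _ (by exact_mod_cast hk0) ?_
    rintro _ ⟨h, ⟨h0, h1⟩, rfl⟩
    have hDk : D - k + k = D := by omega
    have hθ : H₀ * ε ^ 2 * k ≤ ∑ i ∈ Finset.Ioc (D - k) (D - k + k), θ i ^ 2 := by
      refine (hH k (by omega) hkD.le).trans (le_of_eq ?_)
      congr 1; ext i; simp; omega
    refine (measure_mono ?_).trans (chernoff ε (-h) A H₀ hε (by linarith) θ P hP (D - k) k ?_)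
    · intro x hx
      simp only [Set.mem_setOf_eq] at hx ⊢
      have h5 := critF_add ε A x (D - k) k
      rw [hDk] at h5 ⊢
      have h6 : ∑ i ∈ Finset.Ioc (D - k) D, x i ^ 2 ≤ A * ε ^ 2 * k := by linarith [hx.2]
      have := mul_le_mul_of_nonneg_left h6 h0
      linarith
    · have := mul_le_mul_of_nonneg_left hθ h0
      linarith
  have hsub : {x : ℕ → ℝ | ∃ d : ℕ, 1 ≤ d ∧ (d + n₁ < D ∨ D + n₂ < d) ∧
        critF ε A x d ≤ critF ε A x D} ⊆
      (⋃ j : ℕ, {x | critF ε A x (D + (n₂ + 1 + j)) ≤ critF ε A x D}) ∪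
      (⋃ j : ℕ, {x | n₁ + 1 + j < D ∧ critF ε A x (D - (n₁ + 1 + j)) ≤ critF ε A x D}) := by
    rintro x ⟨d, hd1, hd | hd, hc⟩
    · right
      refine Set.mem_iUnion.2 ⟨D - d - (n₁ + 1), ?_⟩
      have e : D - (n₁ + 1 + (D - d - (n₁ + 1))) = d := by omega
      refine ⟨by omega, ?_⟩
      rw [e]; exact hc
    · left
      refine Set.mem_iUnion.2 ⟨d - D - (n₂ + 1), ?_⟩
      have e : D + (n₂ + 1 + (d - D - (n₂ + 1))) = d := by omega
      simp only [Set.mem_setOf_eq]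
      rw [e]; exact hc
  have h1 : 0 < 1 - Real.exp (-(fSup A τ)) := by
    have : Real.exp (-(fSup A τ)) < 1 := by simpa using hα
    linarith
  have h2 : 0 < 1 - Real.exp (-(gSup A H₀)) := by
    have : Real.exp (-(gSup A H₀)) < 1 := by simpa using hβ
    linarith
  rw [ENNReal.ofReal_add (by positivity) (by positivity)]
  refine (measure_mono hsub).trans ((measure_union_le _ _).trans (add_le_add ?_ ?_))
  · exact (measure_iUnion_le _).trans
      ((ENNReal.tsum_le_tsum hup).trans (tsum_geom_bound _ hα n₂))
  · exact (measure_iUnion_le _).trans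
      ((ENNReal.tsum_le_tsum hlow).trans (tsum_geom_bound _ hβ n₁))
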